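/- arXiv:1604.07292 — 5 statements merged into one kernel-verified Lean document; each statement's English description precedes it below -/
import Mathlib

section
/- Let R be an associative algebra over ℂ and let P be a Rota-Baxter operator of weight 1 on R. Define operations on R by a ≺ b = a·P(b), a ≻ b = P(a)·b, and a ⋄ b = a·b, and set a ∗ b = a ≺ b + a ≻ b + a ⋄ b. Then (R, ≺, ≻, ⋄) is a tridendriform algebra, i.e., for all x, y, z ∈ R: (x ≺ y) ≺ z = x ≺ (y ∗ z); (x ≻ y) ≺ z = x ≻ (y ≺ z); (x ∗ y) ≻ z = x ≻ (y ≻ z); (x ≻ y) ⋄ z = x ≻ (y ⋄ z); (x ≺ y) ⋄ z = x ⋄ (y ≻ z); (x ⋄ y) ≺ z = x ⋄ (y ≺ z); (x ⋄ y) ⋄ z = x ⋄ (y ⋄ z). -/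
/-- A Rota-Baxter operator `P` of weight `1` on an associative algebra `R` over `ℂ`
induces a tridendriform algebra structure via `a ≺ b = a·P(b)`, `a ≻ b = P(a)·b`,
`a ⋄ b = a·b`. -/
theorem rota_baxter_weight_one_tridendriform {R : Type*} [Ring R] [Algebra ℂ R]
    (P : R →ₗ[ℂ] R)
    (hP : ∀ a b : R, P a * P b = P (P a * b) + P (a * P b) + P (a * b)) :
    ∀ x y z : R,
      ((x * P y) * P z = x * P (y * P z + P y * z + y * z)) ∧
      ((P x * y) * P z = P x * (y * P z)) ∧
      (P (x * P y + P x * y + x * y) * z = P x * (P y * z)) ∧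
      ((P x * y) * z = P x * (y * z)) ∧
      ((x * P y) * z = x * (P y * z)) ∧
      ((x * y) * P z = x * (y * P z)) ∧
      ((x * y) * z = x * (y * z)) := by
  intro x y z
  -- The Rota-Baxter identity says that `P` is multiplicative from `∗` to the product of `R`.
  have key : ∀ a b : R, P (a * P b + P a * b + a * b) = P a * P b := by
    intro a b
    rw [hP, map_add, map_add, add_comm (P (a * P b))]
  refine ⟨?_, mul_assoc _ _ _, ?_, mul_assoc _ _ _, mul_assoc _ _ _, mul_assoc _ _ _,
    mul_assoc _ _ _⟩
  · rw [key, mul_assoc]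
  · rw [key, mul_assoc]
end

section
/- Let A be an associative algebra over ℂ and let ξ ∈ A satisfy ξ² = −λξ with λ ∈ ℂ, λ ≠ 0. Define operations on A by a ≺ b = λ⁻¹ a ξ b, a ≻ b = λ⁻¹ ξ a b, and a ⋄ b = ab. Then (A, ≺, ≻, ⋄) is a tridendriform algebra, i.e., with a ∗ b = a ≺ b + a ≻ b + a ⋄ b, the following hold for all x, y, z ∈ A: (x ≺ y) ≺ z = x ≺ (y ∗ z); (x ≻ y) ≺ z = x ≻ (y ≺ z); (x ∗ y) ≻ z = x ≻ (y ≻ z); (x ≻ y) ⋄ z = x ≻ (y ⋄ z); (x ≺ y) ⋄ z = x ⋄ (y ≻ z); (x ⋄ y) ≺ z = x ⋄ (y ≺ z); (x ⋄ y) ⋄ z = x ⋄ (y ⋄ z). -/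
/-- A quasi-idempotent element `ξ` of nonzero weight `λ` in an associative algebra `A`
over `ℂ` induces a tridendriform algebra structure via `a ≺ b = λ⁻¹ a ξ b`,
`a ≻ b = λ⁻¹ ξ a b`, `a ⋄ b = ab`. -/
theorem quasiIdempotent_tridendriform {A : Type*} [Ring A] [Algebra ℂ A]
    (ξ : A) (lam : ℂ) (hlam : lam ≠ 0) (h : ξ * ξ = -lam • ξ) :
    ∀ x y z : A,
      (lam⁻¹ • ((lam⁻¹ • (x * ξ * y)) * ξ * z) =
        lam⁻¹ • (x * ξ * (lam⁻¹ • (y * ξ * z) + lam⁻¹ • (ξ * y * z) + y * z))) ∧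
      (lam⁻¹ • ((lam⁻¹ • (ξ * x * y)) * ξ * z) =
        lam⁻¹ • (ξ * x * (lam⁻¹ • (y * ξ * z)))) ∧
      (lam⁻¹ • (ξ * (lam⁻¹ • (x * ξ * y) + lam⁻¹ • (ξ * x * y) + x * y) * z) =
        lam⁻¹ • (ξ * x * (lam⁻¹ • (ξ * y * z)))) ∧
      ((lam⁻¹ • (ξ * x * y)) * z = lam⁻¹ • (ξ * x * (y * z))) ∧
      ((lam⁻¹ • (x * ξ * y)) * z = x * (lam⁻¹ • (ξ * y * z))) ∧
      (lam⁻¹ • ((x * y) * ξ * z) = x * (lam⁻¹ • (y * ξ * z))) ∧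
      ((x * y) * z = x * (y * z)) := by
  -- `λ⁻¹ ξ² w = -ξ w`: the `ξ²`-term in `x ≺ (y ∗ z)` and in `(x ∗ y) ≻ z` cancels the term
  -- coming from `⋄`, and everything else is associativity.
  have key : ∀ w : A, lam⁻¹ • (ξ * (ξ * w)) = -(ξ * w) := fun w => by
    rw [← mul_assoc, h, smul_mul_assoc, smul_smul, mul_neg, inv_mul_cancel₀ hlam, neg_one_smul]
  intro x y z
  refine ⟨?_, ?_, ?_, ?_, ?_, ?_, ?_⟩
  · have h₁ : lam⁻¹ • (x * (ξ * (ξ * (y * z)))) = -(x * (ξ * (y * z))) := by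
      rw [← mul_smul_comm, key, mul_neg]
    simp only [mul_add, mul_smul_comm, smul_mul_assoc, mul_assoc, h₁, neg_add_cancel_right]
  all_goals
    simp only [mul_add, mul_smul_comm, smul_mul_assoc, mul_assoc, key,
      neg_add_cancel_right]
end

section
/- Let A be an associative algebra over ℂ and let ξ ∈ A satisfy ξ² = 0 (a quasi-idempotent element of weight 0). Define operations on A by a ≺ b = a ξ b and a ≻ b = ξ a b. Then (A, ≺, ≻) is a dendriform algebra, i.e., with a ∗ b = a ≺ b + a ≻ b, the following hold for all x, y, z ∈ A: (x ≺ y) ≺ z = x ≺ (y ∗ z); (x ≻ y) ≺ z = x ≻ (y ≺ z); (x ∗ y) ≻ z = x ≻ (y ≻ z). -/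
/-- A quasi-idempotent element `ξ` of weight `0` (i.e. `ξ² = 0`) in an associative
algebra `A` over `ℂ` induces a dendriform algebra structure via `a ≺ b = a ξ b`,
`a ≻ b = ξ a b`. -/
theorem quasiIdempotent_weight_zero_dendriform {A : Type*} [Ring A] [Algebra ℂ A]
    (ξ : A) (h : ξ * ξ = 0) :
    ∀ x y z : A,
      ((x * ξ * y) * ξ * z = x * ξ * (y * ξ * z + ξ * y * z)) ∧
      ((ξ * x * y) * ξ * z = ξ * x * (y * ξ * z)) ∧
      (ξ * (x * ξ * y + ξ * x * y) * z = ξ * x * (ξ * y * z)) := by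
  intro x y z
  -- `ξ * ξ = 0` in the form that applies inside right-associated products
  have h0 : ∀ a : A, ξ * (ξ * a) = 0 := fun a => by rw [← mul_assoc, h, zero_mul]
  refine ⟨?_, ?_, ?_⟩ <;> simp [mul_assoc, mul_add, h0]
end

section
/- Let H be a bialgebra over ℂ with counit ε, and let Λ ∈ H be a left integral, i.e., aΛ = ε(a)Λ for all a ∈ H. Then the left multiplication operator P_Λ(a) = Λa is a Rota-Baxter operator of weight −ε(Λ) on H; that is, for all a, b ∈ H: (Λa)(Λb) = Λ((Λa)b) + Λ(a(Λb)) − ε(Λ)Λ(ab). -/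
/-- If `Λ` is a left integral of a bialgebra `H` over `ℂ`, then left multiplication
by `Λ` is a Rota-Baxter operator of weight `-ε(Λ)` on `H`. -/
theorem left_integral_rota_baxter {H : Type*} [Ring H] [Bialgebra ℂ H]
    (Λ : H) (hΛ : ∀ a : H, a * Λ = (Coalgebra.counit (R := ℂ) a) • Λ) :
    ∀ a b : H, (Λ * a) * (Λ * b) =
      Λ * ((Λ * a) * b) + Λ * (a * (Λ * b)) -
        (Coalgebra.counit (R := ℂ) Λ) • (Λ * (a * b)) := by
  intro a b
  -- By associativity `(Λa)(Λb) = Λ(a(Λb))`; the other two terms cancel since `Λ² = ε(Λ)Λ`.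
  have h : Λ * ((Λ * a) * b) = (Coalgebra.counit (R := ℂ) Λ) • (Λ * (a * b)) := by
    rw [mul_assoc Λ a b, ← mul_assoc Λ Λ, hΛ Λ, smul_mul_assoc]
  rw [h, mul_assoc Λ a (Λ * b), add_sub_cancel_left]
end

section
/- Let R be a commutative ring, let u be a unit of R, and set q = u². Let A be a unital associative R-algebra and let T ∈ A satisfy T² = (q − 1)T + q·1. Then left multiplication by the element C = u⁻¹·(T − q·1) is a Rota-Baxter operator of weight u + u⁻¹ on A; that is, for all a, b ∈ A: (Ca)(Cb) = C((Ca)b) + C(a(Cb)) + (u + u⁻¹)·C(ab). -/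
/-! Left multiplication by any `C` with `C² = -λC` is a Rota-Baxter operator of weight `λ`:
`(Ca)(Cb) = C(a(Cb))` by associativity, while `C((Ca)b) + λC(ab) = (C² + λC)ab = 0`. The Hecke
relation gives `C² = -(u + u⁻¹)C` for the Kazhdan-Lusztig element. -/

/-- The Kazhdan-Lusztig element is a quasi-idempotent: `C² = -(u + u⁻¹) C`. It follows from
`(T - q)² = -(q + 1)(T - q)`, the Hecke relation being `(T - q)(T + 1) = 0`. -/
theorem kazhdanLusztig_mul_self {R : Type*} [CommRing R]
    {A : Type*} [Ring A] [Algebra R A] (u : Rˣ) (T : A)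
    (hT : T * T = ((u : R) ^ 2 - 1) • T + ((u : R) ^ 2) • (1 : A)) :
    (((u⁻¹ : Rˣ) : R) • (T - ((u : R) ^ 2) • (1 : A))) *
        (((u⁻¹ : Rˣ) : R) • (T - ((u : R) ^ 2) • (1 : A))) =
      -(((u : R) + ((u⁻¹ : Rˣ) : R)) •
        (((u⁻¹ : Rˣ) : R) • (T - ((u : R) ^ 2) • (1 : A)))) := by
  have hu : (u : R) * ((u⁻¹ : Rˣ) : R) = 1 := u.mul_inv
  generalize ((u⁻¹ : Rˣ) : R) = v at *
  generalize (u : R) = w at *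
  have h : (T - w ^ 2 • (1 : A)) * (T - w ^ 2 • (1 : A)) =
      (-(w ^ 2 + 1)) • (T - w ^ 2 • (1 : A)) := by
    simp only [sub_mul, mul_sub, hT, smul_mul_assoc, mul_smul_comm, one_mul, mul_one]
    module
  have hc : v * v * (-(w ^ 2 + 1)) = -((w + v) * v) := by
    linear_combination (-(w * v)) * hu
  rw [smul_mul_assoc, mul_smul_comm, h, smul_smul, smul_smul, smul_smul, ← neg_smul]
  rw [hc]

/-- Let `u` be a unit of a commutative ring `R`, `q = u²`, and `T` an element of a
unital associative `R`-algebra satisfying the Hecke relation `T² = (q-1)T + q`.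
Then left multiplication by `C = u⁻¹(T - q)` is a Rota-Baxter operator of weight
`u + u⁻¹` on `A`. -/
theorem hecke_kazhdan_lusztig_rota_baxter {R : Type*} [CommRing R]
    {A : Type*} [Ring A] [Algebra R A] (u : Rˣ) (T : A)
    (hT : T * T = ((u : R) ^ 2 - 1) • T + ((u : R) ^ 2) • (1 : A)) :
    ∀ a b : A,
      ((((u⁻¹ : Rˣ) : R) • (T - ((u : R) ^ 2) • (1 : A))) * a) *
          ((((u⁻¹ : Rˣ) : R) • (T - ((u : R) ^ 2) • (1 : A))) * b) =
        (((u⁻¹ : Rˣ) : R) • (T - ((u : R) ^ 2) • (1 : A))) *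
            (((((u⁻¹ : Rˣ) : R) • (T - ((u : R) ^ 2) • (1 : A))) * a) * b) +
          (((u⁻¹ : Rˣ) : R) • (T - ((u : R) ^ 2) • (1 : A))) *
            (a * ((((u⁻¹ : Rˣ) : R) • (T - ((u : R) ^ 2) • (1 : A))) * b)) +
          ((u : R) + ((u⁻¹ : Rˣ) : R)) •
            ((((u⁻¹ : Rˣ) : R) • (T - ((u : R) ^ 2) • (1 : A))) * (a * b)) := by
  intro a b
  have h := kazhdanLusztig_mul_self u T hT
  generalize (((u⁻¹ : Rˣ) : R) • (T - ((u : R) ^ 2) • (1 : A))) = C at *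
  -- `(Ca)(Cb)` equals `C(a(Cb))` by associativity; the other two terms cancel since `C² = -λC`.
  have hCC : C * (C * a * b) = -(((u : R) + ((u⁻¹ : Rˣ) : R)) • (C * (a * b))) := by
    rw [mul_assoc C a b, ← mul_assoc C C, h, neg_mul, smul_mul_assoc]
  rw [hCC, mul_assoc C a (C * b)]
  abel
end
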